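/- arXiv:0910.2033 — 2 statements merged into one kernel-verified Lean document; each statement's English description precedes it below -/
import Mathlib

section
/- Let M be an n×n primitive Boolean matrix (n ≥ 2) with Boolean rank b(M) = b. Then the scrambling index satisfies k(M) ≤ ⌈((b−1)² + 1)/2⌉ + 1. -/
/-!
A Boolean matrix is read as a digraph, so that `bpow A k u v` says that there is a walk of length
`k` from `u` to `v`, and `scram A ≤ k` says that any two vertices have a common endpoint of walks
of length `k` (`Meets A k`).

*Reduction to `b × b` matrices.* Let `M = A B` with inner dimension `b = brank M`, and `N = B A`.
By minimality of `b`, `A` has no zero column and `B` no zero row, so `N` is again primitive: walks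
of `M` of length `r` give walks of `N` of length `r + 1` (`bpow_conj`). In the other direction,
walks of `N` of length `k` give walks of `M` of length `k + 1`, so two vertices of `M` meet at
most one step later than the vertices of `N` to which `A` joins them.

*The bound for a primitive digraph on `n` vertices* (`meets_of_primitive`). Let `s` be the girth and
`C` a shortest cycle. Every vertex reaches `C` in exactly `n - s` steps (`reach_cycle`). From a
vertex with a closed walk of length `s`, the set reached in `s * t` steps grows strictly with `t`
until it is everything, so two such sets intersect once `2 * (t + 1) > n` (`meets_of_closed`).
Hence any two vertices meet after `n - s + s * (n / 2)` steps. Since `s ≤ n - 1`, this is good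
enough if `n` is odd, or if `n` is even and `s ≤ n - 3`.

For `n = 2 * h + 2` and `s ≥ n - 2`, there is a cycle `D` of odd length `m = n - 1`, which every
vertex reaches in one step. Two vertices of `D` are at distance `δ ≤ h` along `D`.
If `s = n - 1`, take `D = C`; primitivity gives a closed walk of length `n` through every vertex of
`D` (a Hamiltonian cycle, or a loop traversed twice for `n = 2`). Following `D` for `δ * (m + 1)`
steps moves the rear vertex forward by `δ`, while the front vertex repeats its closed walk of length
`m + 1` `δ` times (`IsCyc.meets_of_succ`). If `s = n - 2`, primitivity gives a cycle `D` of odd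
length, which must be `n - 1`, and `D` shares a vertex `c` with `C`; the rear vertex goes to `c`
and then `δ` times around `C`, of length `m - 1`, while the front one follows `D` and falls back by
`δ` (`IsCyc.meets_of_pred`).
-/

/-- Boolean matrix product over the Boolean semiring, modeled with `Prop` entries. -/
def bmul {l m n : ℕ} (A : Fin l → Fin m → Prop) (B : Fin m → Fin n → Prop) :
    Fin l → Fin n → Prop := fun i j => ∃ k, A i k ∧ B k j

/-- Transpose of a Boolean matrix. -/
def btrans {m n : ℕ} (A : Fin m → Fin n → Prop) : Fin n → Fin m → Prop := fun i j => A j i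

/-- Boolean matrix power. -/
def bpow {n : ℕ} (A : Fin n → Fin n → Prop) : ℕ → (Fin n → Fin n → Prop)
  | 0 => fun i j => i = j
  | k + 1 => bmul A (bpow A k)

/-- The all-ones Boolean matrix `J`. -/
def bJ {m n : ℕ} : Fin m → Fin n → Prop := fun _ _ => True

/-- A square Boolean matrix is primitive if some positive power is the all-ones matrix. -/
def IsPrimitive {n : ℕ} (A : Fin n → Fin n → Prop) : Prop :=
  ∃ r, 1 ≤ r ∧ bpow A r = bJ

/-- The scrambling index: least `k ≥ 1` with `A^k (Aᵗ)^k = J`. -/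
noncomputable def scram {n : ℕ} (A : Fin n → Fin n → Prop) : ℕ :=
  sInf {k | 1 ≤ k ∧ bmul (bpow A k) (bpow (btrans A) k) = bJ}

/-- The Boolean rank: least `b ≥ 1` admitting a factorization through dimension `b`. -/
noncomputable def brank {n m : ℕ} (M : Fin n → Fin m → Prop) : ℕ :=
  sInf {b | 0 < b ∧ ∃ (A : Fin n → Fin b → Prop) (B : Fin b → Fin m → Prop), M = bmul A B}

/-- `A` has no zero row. -/
def NoZeroRow {m n : ℕ} (A : Fin m → Fin n → Prop) : Prop := ∀ i, ∃ j, A i j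

/-- `A` has no zero column. -/
def NoZeroCol {m n : ℕ} (A : Fin m → Fin n → Prop) : Prop := ∀ j, ∃ i, A i j

/-- The Wielandt matrix `W_b` (0-indexed): arcs `i → i+1`, `b-2 → 0`, `b-1 → 0`. -/
def Wielandt (b : ℕ) : Fin b → Fin b → Prop :=
  fun i j => j.val = i.val + 1 ∨ (i.val = b - 2 ∧ j.val = 0) ∨ (i.val = b - 1 ∧ j.val = 0)

/-! ### Walks -/

lemma bpow_add {n : ℕ} (A : Fin n → Fin n → Prop) (k l : ℕ) {u v w : Fin n}
    (h₁ : bpow A k u v) (h₂ : bpow A l v w) : bpow A (k + l) u w := by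
  induction k generalizing u with
  | zero => simp only [bpow] at h₁; subst h₁; simpa using h₂
  | succ k ih =>
    obtain ⟨x, hx, hxv⟩ := h₁
    rw [Nat.add_right_comm]
    exact ⟨x, hx, ih hxv⟩

lemma bpow_one {n : ℕ} (A : Fin n → Fin n → Prop) {u v : Fin n} (h : A u v) : bpow A 1 u v :=
  ⟨v, h, rfl⟩

lemma bpow_mul {n : ℕ} (A : Fin n → Fin n → Prop) (k t : ℕ) {u : Fin n}
    (h : bpow A k u u) : bpow A (t * k) u u := by
  induction t with
  | zero => rw [Nat.zero_mul]; rfl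
  | succ t ih => rw [Nat.succ_mul]; exact bpow_add A _ _ ih h

lemma bpow_split {n : ℕ} (A : Fin n → Fin n → Prop) (k l : ℕ) {u w : Fin n}
    (h : bpow A (k + l) u w) : ∃ v, bpow A k u v ∧ bpow A l v w := by
  induction k generalizing u with
  | zero => exact ⟨u, rfl, by simpa using h⟩
  | succ k ih =>
    rw [Nat.add_right_comm] at h
    obtain ⟨x, hx, hxw⟩ := h
    obtain ⟨v, h₁, h₂⟩ := ih hxw
    exact ⟨v, ⟨x, hx, h₁⟩, h₂⟩

lemma bpow_btrans {n : ℕ} (A : Fin n → Fin n → Prop) (k : ℕ) {u v : Fin n}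
    (h : bpow A k u v) : bpow (btrans A) k v u := by
  induction k generalizing u with
  | zero => exact Eq.symm h
  | succ k ih =>
    obtain ⟨x, hx, hxv⟩ := h
    exact bpow_add _ k 1 (ih hxv) (bpow_one (btrans A) hx)

lemma noZeroRow_of_primitive {n : ℕ} {A : Fin n → Fin n → Prop} (hA : IsPrimitive A) :
    NoZeroRow A := by
  obtain ⟨r, hr, hJ⟩ := hA
  intro i
  obtain ⟨r, rfl⟩ := Nat.exists_eq_add_of_le' hr
  have : bpow A (r + 1) i i := by rw [hJ]; trivial
  obtain ⟨x, hx, -⟩ := this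
  exact ⟨x, hx⟩

lemma exists_walk {n : ℕ} {A : Fin n → Fin n → Prop} (hA : NoZeroRow A) (k : ℕ) (u : Fin n) :
    ∃ v, bpow A k u v := by
  induction k generalizing u with
  | zero => exact ⟨u, rfl⟩
  | succ k ih =>
    obtain ⟨x, hx⟩ := hA u
    obtain ⟨v, hv⟩ := ih x
    exact ⟨v, x, hx, hv⟩

lemma eventually_all {n : ℕ} {A : Fin n → Fin n → Prop} (hA : IsPrimitive A) :
    ∃ r, ∀ k, r ≤ k → ∀ u v, bpow A k u v := by
  have hrow := noZeroRow_of_primitive hA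
  obtain ⟨r, -, hJ⟩ := hA
  refine ⟨r, fun k hk u v => ?_⟩
  obtain ⟨l, rfl⟩ := Nat.exists_eq_add_of_le' hk
  obtain ⟨x, hx⟩ := exists_walk hrow l u
  exact bpow_add A l r hx (by rw [hJ]; trivial)

/-- Walks of length `k` from `u` and from `v` can end at a common vertex. -/
def Meets {n : ℕ} (A : Fin n → Fin n → Prop) (k : ℕ) (u v : Fin n) : Prop :=
  ∃ w, bpow A k u w ∧ bpow A k v w

lemma Meets.symm {n : ℕ} {A : Fin n → Fin n → Prop} {k : ℕ} {u v : Fin n}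
    (h : Meets A k u v) : Meets A k v u := by
  obtain ⟨w, h₁, h₂⟩ := h
  exact ⟨w, h₂, h₁⟩

lemma Meets.mono {n : ℕ} {A : Fin n → Fin n → Prop} (hA : NoZeroRow A) {k l : ℕ} (hkl : k ≤ l)
    {u v : Fin n} (h : Meets A k u v) : Meets A l u v := by
  obtain ⟨w, h₁, h₂⟩ := h
  obtain ⟨d, rfl⟩ := Nat.exists_eq_add_of_le hkl
  obtain ⟨x, hx⟩ := exists_walk hA d w
  exact ⟨x, bpow_add A _ _ h₁ hx, bpow_add A _ _ h₂ hx⟩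

lemma Meets.prepend {n : ℕ} {A : Fin n → Fin n → Prop} {k l : ℕ} {u v u' v' : Fin n}
    (hu : bpow A k u u') (hv : bpow A k v v') (h : Meets A l u' v') : Meets A (k + l) u v := by
  obtain ⟨w, h₁, h₂⟩ := h
  exact ⟨w, bpow_add A _ _ hu h₁, bpow_add A _ _ hv h₂⟩

/-! ### Closed walks and cycles -/

/-- `f` runs periodically through a closed walk of length `m > 0`; it is a cycle if, moreover, `f`
is injective on `Set.Iio m`. -/
structure IsCyc {n : ℕ} (A : Fin n → Fin n → Prop) (f : ℕ → Fin n) (m : ℕ) : Prop where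
  pos : 0 < m
  step : ∀ i, A (f i) (f (i + 1))
  per : ∀ i, f (i + m) = f i

lemma exists_path {n : ℕ} (A : Fin n → Fin n → Prop) (k : ℕ) {u v : Fin n} (h : bpow A k u v) :
    ∃ g : ℕ → Fin n, g 0 = u ∧ g k = v ∧ ∀ i < k, A (g i) (g (i + 1)) := by
  induction k generalizing u with
  | zero => exact ⟨fun _ => u, rfl, h, by simp⟩
  | succ k ih =>
    obtain ⟨x, hx, hxv⟩ := h
    obtain ⟨g, h0, hk, hg⟩ := ih hxv
    refine ⟨fun i => Nat.casesOn i u g, rfl, hk, ?_⟩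
    rintro (_ | i) hi
    · simpa [h0] using hx
    · exact hg i (by omega)

lemma exists_cyc {n : ℕ} (A : Fin n → Fin n → Prop) {m : ℕ} (hm : 0 < m) {u : Fin n}
    (h : bpow A m u u) : ∃ f, IsCyc A f m := by
  obtain ⟨g, h0, hk, hg⟩ := exists_path A m h
  refine ⟨fun i => g (i % m), hm, fun i => ?_, fun i => by simp⟩
  have hlt := Nat.mod_lt i hm
  have hs := hg (i % m) hlt
  have key : (i + 1) % m = if i % m + 1 = m then 0 else i % m + 1 := by
    split_ifs with h1
    · rw [← Nat.mod_add_mod, h1, Nat.mod_self]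
    · rw [← Nat.mod_add_mod, Nat.mod_eq_of_lt (by omega)]
  simp only [key]
  split_ifs with h1
  · rw [h1, hk, ← h0] at hs; exact hs
  · exact hs

lemma IsCyc.walk {n : ℕ} {A : Fin n → Fin n → Prop} {f : ℕ → Fin n} {m : ℕ} (hf : IsCyc A f m)
    (i k : ℕ) : bpow A k (f i) (f (i + k)) := by
  induction k with
  | zero => rfl
  | succ k ih => exact bpow_add A k 1 ih (bpow_one A (hf.step _))

lemma IsCyc.congr {n : ℕ} {A : Fin n → Fin n → Prop} {f : ℕ → Fin n} {m : ℕ} (hf : IsCyc A f m)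
    {i j : ℕ} (h : i ≡ j [MOD m]) : f i = f j := by
  have hp : Function.Periodic f m := hf.per
  rw [← hp.map_mod_nat i, ← hp.map_mod_nat j, h]

lemma IsCyc.closed {n : ℕ} {A : Fin n → Fin n → Prop} {f : ℕ → Fin n} {m : ℕ} (hf : IsCyc A f m)
    (i : ℕ) : bpow A m (f i) (f i) := by
  have := hf.walk i m
  rwa [hf.per] at this

/-- A repeated vertex splits a closed walk into two shorter ones. -/
lemma IsCyc.split {n : ℕ} {A : Fin n → Fin n → Prop} {f : ℕ → Fin n} {m : ℕ} (hf : IsCyc A f m)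
    {i j : ℕ} (hij : i < j) (hj : j < m) (h : f i = f j) :
    bpow A (j - i) (f i) (f i) ∧ bpow A (m - (j - i)) (f i) (f i) := by
  constructor
  · have := hf.walk i (j - i)
    rwa [Nat.add_sub_cancel' hij.le, ← h] at this
  · have := hf.walk j (m - (j - i))
    rwa [show j + (m - (j - i)) = i + m by omega, hf.per, ← h] at this

/-- The vertices on a closed walk. -/
def cycVerts {n : ℕ} (f : ℕ → Fin n) (m : ℕ) : Finset (Fin n) := (Finset.range m).image f

lemma card_cycVerts {n : ℕ} {f : ℕ → Fin n} {m : ℕ} (h : Set.InjOn f (Set.Iio m)) :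
    (cycVerts f m).card = m := by
  rw [cycVerts, Finset.card_image_of_injOn (by simpa using h), Finset.card_range]

lemma le_card_of_inj {n : ℕ} {f : ℕ → Fin n} {m : ℕ} (h : Set.InjOn f (Set.Iio m)) : m ≤ n := by
  have := Finset.card_le_univ (cycVerts f m)
  rwa [card_cycVerts h, Fintype.card_fin] at this

lemma IsCyc.injOn {n : ℕ} {A : Fin n → Fin n → Prop} {f : ℕ → Fin n} {m : ℕ} (hf : IsCyc A f m)
    (h : ∀ p, 0 < p → p < m → ∀ u, bpow A p u u → bpow A (m - p) u u → False) :
    Set.InjOn f (Set.Iio m) := by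
  have key : ∀ i j, i < j → j < m → f i ≠ f j := fun i j hij hj he => by
    obtain ⟨h₁, h₂⟩ := hf.split hij hj he
    exact h (j - i) (by omega) (by omega) _ h₁ h₂
  intro i hi j hj he
  rcases lt_trichotomy i j with hl | hl | hl
  · exact (key i j hl hj he).elim
  · exact hl
  · exact (key j i hl hi he.symm).elim

/-- A shortest closed walk with length not divisible by `d` is a cycle. It exists because closed
walks of two consecutive lengths exist. -/
lemma exists_cyc_not_dvd {n : ℕ} [NeZero n] {A : Fin n → Fin n → Prop} (hA : IsPrimitive A)
    {d : ℕ} (hd : 2 ≤ d) : ∃ f L, IsCyc A f L ∧ ¬ d ∣ L ∧ Set.InjOn f (Set.Iio L) := by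
  classical
  obtain ⟨r, hr⟩ := eventually_all hA
  have hex : ∃ L, ¬ d ∣ L ∧ ∃ u, bpow A L u u := by
    refine ⟨d * r + 1, fun h => ?_, 0, hr _ (by nlinarith) 0 0⟩
    have := (Nat.dvd_add_right (dvd_mul_right d r)).1 h
    have := Nat.le_of_dvd one_pos this
    omega
  obtain ⟨hL, u, hu⟩ := Nat.find_spec hex
  have hmin : ∀ p, p < Nat.find hex → ∀ u, bpow A p u u → d ∣ p := fun p hp u hu => by
    by_contra hdp
    exact Nat.find_min hex hp ⟨hdp, u, hu⟩
  have hpos : 0 < Nat.find hex := Nat.pos_of_ne_zero fun h => hL (h ▸ dvd_zero d)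
  obtain ⟨f, hf⟩ := exists_cyc A hpos hu
  refine ⟨f, _, hf, hL, hf.injOn fun p hp hpL v h₁ h₂ => hL ?_⟩
  have := (hmin p hpL v h₁).add (hmin _ (by omega) v h₂)
  rwa [Nat.add_sub_cancel' hpL.le] at this

/-- A closed walk whose length `s` is the girth is a cycle. -/
lemma exists_girth {n : ℕ} [NeZero n] {A : Fin n → Fin n → Prop} (hA : IsPrimitive A) :
    ∃ f s, IsCyc A f s ∧ Set.InjOn f (Set.Iio s) ∧ ∀ p, 0 < p → ∀ u, bpow A p u u → s ≤ p := by
  classical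
  have hex : ∃ L, 0 < L ∧ ∃ u, bpow A L u u := by
    obtain ⟨r, hr⟩ := eventually_all hA
    exact ⟨r + 1, by omega, 0, hr _ (by omega) 0 0⟩
  obtain ⟨hL, u, hu⟩ := Nat.find_spec hex
  have hmin : ∀ p, 0 < p → ∀ u, bpow A p u u → Nat.find hex ≤ p := fun p hp u hu =>
    Nat.find_min' hex ⟨hp, u, hu⟩
  obtain ⟨f, hf⟩ := exists_cyc A hL hu
  refine ⟨f, _, hf, hf.injOn fun p hp hpL v h₁ _ => ?_, hmin⟩
  have := hmin p hp v h₁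
  omega

/-! ### Growth of reachable sets -/

/-- An increasing sequence of sets which stays constant once it repeats and which exhausts the
vertices gains at least one vertex in each step until it is everything. -/
lemma card_grow {n : ℕ} (T : ℕ → Finset (Fin n)) (hmono : ∀ k, T k ⊆ T (k + 1))
    (hstab : ∀ k, T (k + 1) = T k → T (k + 2) = T (k + 1)) (hex : ∃ j, T j = Finset.univ) (k : ℕ) :
    T k = Finset.univ ∨ (T 0).card + k ≤ (T k).card := by
  induction k with
  | zero => right; simp
  | succ k ih =>
    rcases ih with h | h
    · left
      exact Finset.univ_subset_iff.1 (h ▸ hmono k)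
    · by_cases he : T (k + 1) = T k
      · left
        have hconst : ∀ l, T (k + l + 1) = T (k + l) := fun l => by
          induction l with
          | zero => exact he
          | succ l ih => exact hstab _ ih
        have hconst' : ∀ l, T (k + l) = T k := fun l => by
          induction l with
          | zero => rfl
          | succ l ih => exact (hconst l).trans ih
        obtain ⟨j, hj⟩ := hex
        have hsub : T j ⊆ T (k + j) := monotone_nat_of_le_succ hmono (by omega)
        rw [hj, hconst', Finset.univ_subset_iff] at hsub
        rw [he, hsub]
      · right
        have := Finset.card_lt_card ((hmono k).ssubset_of_ne (Ne.symm he))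
        omega

/-- Every vertex reaches a given cycle of length `m` in exactly `n - m` steps. -/
lemma reach_cycle {n : ℕ} {A : Fin n → Fin n → Prop} (hA : IsPrimitive A) {f : ℕ → Fin n} {m : ℕ}
    (hf : IsCyc A f m) (hinj : Set.InjOn f (Set.Iio m)) (u : Fin n) :
    ∃ i, bpow A (n - m) u (f i) := by
  classical
  let T : ℕ → Finset (Fin n) := fun k => Finset.univ.filter fun u => ∃ i, bpow A k u (f i)
  have hT : ∀ k u, u ∈ T k ↔ ∃ i, bpow A k u (f i) := fun k u => by simp [T]
  have hT0 : T 0 = cycVerts f m := by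
    ext v
    simp only [hT, cycVerts, Finset.mem_image, Finset.mem_range]
    constructor
    · rintro ⟨i, hi⟩
      exact ⟨i % m, Nat.mod_lt _ hf.pos, (hf.congr (Nat.mod_modEq i m)).trans (Eq.symm hi)⟩
    · rintro ⟨i, -, hi⟩
      exact ⟨i, hi.symm⟩
  have hsucc : ∀ k v, v ∈ T (k + 1) ↔ ∃ x, A v x ∧ x ∈ T k := fun k v => by
    simp only [hT]
    constructor
    · rintro ⟨i, x, hx, h⟩
      exact ⟨x, hx, i, h⟩
    · rintro ⟨x, hx, i, h⟩
      exact ⟨i, x, hx, h⟩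
  have hgrow := card_grow T
    (fun k v hv => by
      obtain ⟨i, hi⟩ := (hT k v).1 hv
      exact (hT _ v).2 ⟨i + 1, bpow_add A k 1 hi (bpow_one A (hf.step i))⟩)
    (fun k hk => by ext v; rw [hsucc, hk, ← hsucc, hk])
    (by
      obtain ⟨r, hr⟩ := eventually_all hA
      exact ⟨r, Finset.eq_univ_of_forall fun v => (hT r v).2 ⟨0, hr r le_rfl _ _⟩⟩)
    (n - m)
  have huniv : T (n - m) = Finset.univ := by
    rcases hgrow with h | h
    · exact h
    · rw [hT0, card_cycVerts hinj] at h
      refine Finset.eq_univ_of_card _ (le_antisymm (Finset.card_le_univ _) ?_)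
      rw [Fintype.card_fin]
      omega
  exact (hT _ u).1 (huniv ▸ Finset.mem_univ u)

/-- If `c` lies on a closed walk of length `s`, then at least `t + 1` vertices (or all of them) are
reached from `c` in `s * t` steps. -/
lemma card_reach {n : ℕ} {A : Fin n → Fin n → Prop} (hA : IsPrimitive A) {s : ℕ} (hs : 0 < s)
    {c : Fin n} (hc : bpow A s c c) (t : ℕ) (S : Finset (Fin n))
    (hS : ∀ v, v ∈ S ↔ bpow A (s * t) c v) : S = Finset.univ ∨ t + 1 ≤ S.card := by
  classical
  let T : ℕ → Finset (Fin n) := fun k => Finset.univ.filter fun v => bpow A (s * k) c v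
  have hT : ∀ k v, v ∈ T k ↔ bpow A (s * k) c v := fun k v => by simp [T]
  have hST : S = T t := by ext v; rw [hS, hT]
  have hT0 : (T 0).card = 1 := by
    rw [Finset.card_eq_one]
    refine ⟨c, ?_⟩
    ext v
    rw [hT, Finset.mem_singleton]
    exact eq_comm
  have hsucc : ∀ k v, v ∈ T (k + 1) ↔ ∃ x, x ∈ T k ∧ bpow A s x v := fun k v => by
    simp only [hT]
    constructor
    · exact fun h => bpow_split A (s * k) s h
    · rintro ⟨x, h₁, h₂⟩
      exact bpow_add A (s * k) s h₁ h₂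
  have hgrow := card_grow T
    (fun k v hv => by
      rw [hT] at hv ⊢
      have := bpow_add A _ _ hc hv
      rwa [show s + s * k = s * (k + 1) by ring] at this)
    (fun k hk => by ext v; rw [hsucc, hk, ← hsucc, hk])
    (by
      obtain ⟨r, hr⟩ := eventually_all hA
      exact ⟨r, Finset.eq_univ_of_forall fun v => (hT r v).2 (hr _ (by nlinarith) _ _)⟩)
    t
  rw [hT0] at hgrow
  rw [hST]
  rcases hgrow with h | h
  · exact Or.inl h
  · exact Or.inr (by omega)

/-- Two sets of at least `t + 1` vertices intersect if `n < 2 * (t + 1)`. -/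
lemma meets_of_closed {n : ℕ} {A : Fin n → Fin n → Prop} (hA : IsPrimitive A) {s : ℕ} (hs : 0 < s)
    {c d : Fin n} (hc : bpow A s c c) (hd : bpow A s d d) {t : ℕ} (ht : n < 2 * (t + 1)) :
    Meets A (s * t) c d := by
  classical
  set S := Finset.univ.filter fun v => bpow A (s * t) c v with hS
  set T := Finset.univ.filter fun v => bpow A (s * t) d v with hT
  have hS' : ∀ v, v ∈ S ↔ bpow A (s * t) c v := fun v => by simp [hS]
  have hT' : ∀ v, v ∈ T ↔ bpow A (s * t) d v := fun v => by simp [hT]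
  have hrow := noZeroRow_of_primitive hA
  rcases card_reach hA hs hc t S hS' with h₁ | h₁
  · obtain ⟨w, hw⟩ := exists_walk hrow (s * t) d
    exact ⟨w, (hS' w).1 (h₁ ▸ Finset.mem_univ w), hw⟩
  rcases card_reach hA hs hd t T hT' with h₂ | h₂
  · obtain ⟨w, hw⟩ := exists_walk hrow (s * t) c
    exact ⟨w, hw, (hT' w).1 (h₂ ▸ Finset.mem_univ w)⟩
  have hnd : ¬ Disjoint S T := fun h => by
    have := Finset.card_le_univ (S ∪ T)
    rw [Finset.card_union_of_disjoint h, Fintype.card_fin] at this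
    omega
  obtain ⟨w, hw₁, hw₂⟩ := Finset.not_disjoint_iff.1 hnd
  exact ⟨w, (hS' w).1 hw₁, (hT' w).1 hw₂⟩

/-! ### Two vertices on an odd cycle -/

/-- Two vertices on a cycle of length `2 * h + 1` are at distance at most `h` along it, in one of
the two orders. -/
lemma IsCyc.meets_of_dist {n : ℕ} {A : Fin n → Fin n → Prop} {f : ℕ → Fin n} {h : ℕ}
    (hf : IsCyc A f (2 * h + 1)) {k : ℕ} (H : ∀ i δ, δ ≤ h → Meets A k (f i) (f (i + δ)))
    (i j : ℕ) : Meets A k (f i) (f j) := by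
  have key : ∀ i j, i ≤ j → j < 2 * h + 1 → Meets A k (f i) (f j) := fun i j hij hj => by
    by_cases hd : j - i ≤ h
    · have := H i (j - i) hd
      rwa [Nat.add_sub_cancel' hij] at this
    · have := H j (2 * h + 1 - (j - i)) (by omega)
      rw [show j + (2 * h + 1 - (j - i)) = i + (2 * h + 1) by omega, hf.per] at this
      exact this.symm
  rw [hf.congr (Nat.mod_modEq i (2 * h + 1)).symm, hf.congr (Nat.mod_modEq j (2 * h + 1)).symm]
  have hi := Nat.mod_lt i hf.pos
  have hj := Nat.mod_lt j hf.pos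
  rcases le_total (i % (2 * h + 1)) (j % (2 * h + 1)) with hl | hl
  · exact key _ _ hl hj
  · exact (key _ _ hl hi).symm

/-- Following the cycle of length `2 * h + 1` for `δ * (2 * h + 2)` steps moves a vertex forward by
`δ`, which brings it to the vertex `δ` ahead, kept in place by its closed walk. -/
lemma IsCyc.meets_of_succ {n : ℕ} {A : Fin n → Fin n → Prop} (hrow : NoZeroRow A) {f : ℕ → Fin n}
    {h : ℕ} (hf : IsCyc A f (2 * h + 1)) (hclosed : ∀ i, bpow A (2 * h + 2) (f i) (f i))
    (i j : ℕ) : Meets A (h * (2 * h + 2)) (f i) (f j) := by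
  refine hf.meets_of_dist (fun i δ hδ => ?_) i j
  refine Meets.mono hrow (Nat.mul_le_mul_right (2 * h + 2) hδ)
    ⟨f (i + δ), ?_, bpow_mul A _ _ (hclosed _)⟩
  have := hf.walk i (δ * (2 * h + 2))
  rwa [hf.congr (i := i + δ * (2 * h + 2)) (j := i + δ)] at this
  rw [show i + δ * (2 * h + 2) = i + δ + (2 * h + 1) * δ by ring]
  simp [Nat.ModEq]

/-- One closed walk of length `2 * h` at a vertex of the cycle suffices: the rear vertex goes there
and then waits by repeating it, while each repetition sets the front vertex back by one. -/
lemma IsCyc.meets_of_pred {n : ℕ} {A : Fin n → Fin n → Prop} (hrow : NoZeroRow A) {f : ℕ → Fin n}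
    {h : ℕ} (hf : IsCyc A f (2 * h + 1)) {x : ℕ} (hx : bpow A (2 * h) (f x) (f x))
    (i j : ℕ) : Meets A (2 * h + h * (2 * h)) (f i) (f j) := by
  refine hf.meets_of_dist (fun i δ hδ => ?_) i j
  -- `a` steps along the cycle lead from position `i` to position `x`
  obtain ⟨a, ha, hax⟩ : ∃ a ≤ 2 * h, i + a ≡ x [MOD 2 * h + 1] := by
    refine ⟨(x + 2 * h * i) % (2 * h + 1), Nat.le_of_lt_succ (Nat.mod_lt _ hf.pos), ?_⟩
    refine ((Nat.mod_modEq _ _).add_left i).trans ?_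
    rw [show i + (x + 2 * h * i) = x + (2 * h + 1) * i by ring]
    simp [Nat.ModEq]
  refine Meets.mono hrow (Nat.add_le_add ha (Nat.mul_le_mul_right (2 * h) hδ)) ⟨f x, ?_, ?_⟩
  · have := hf.walk i a
    rw [hf.congr hax] at this
    exact bpow_add A _ _ this (bpow_mul A _ _ hx)
  · have := hf.walk (i + δ) (a + δ * (2 * h))
    rwa [hf.congr (i := i + δ + (a + δ * (2 * h))) (j := x)] at this
    rw [show i + δ + (a + δ * (2 * h)) = i + a + (2 * h + 1) * δ by ring]
    exact (by simp [Nat.ModEq] : i + a + (2 * h + 1) * δ ≡ i + a [MOD 2 * h + 1]).trans hax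

/-! ### The bound for primitive matrices -/

lemma IsCyc.meets_of_reach {n : ℕ} {A : Fin n → Fin n → Prop} (hA : IsPrimitive A)
    {f : ℕ → Fin n} {m : ℕ} (hf : IsCyc A f m) (hinj : Set.InjOn f (Set.Iio m)) {k : ℕ}
    (H : ∀ i j, Meets A k (f i) (f j)) (u v : Fin n) : Meets A (n - m + k) u v := by
  obtain ⟨i, hi⟩ := reach_cycle hA hf hinj u
  obtain ⟨j, hj⟩ := reach_cycle hA hf hinj v
  exact (H i j).prepend hi hj

/-- The girth of a primitive digraph on at least two vertices is smaller than the number of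
vertices: otherwise all closed walks would have length divisible by that number. -/
lemma girth_lt {n : ℕ} (hn : 2 ≤ n) {A : Fin n → Fin n → Prop} (hA : IsPrimitive A) {s : ℕ}
    (hs : ∀ p, 0 < p → ∀ u, bpow A p u u → s ≤ p) : s < n := by
  have : NeZero n := ⟨by omega⟩
  obtain ⟨g, L, hg, hL, hinj⟩ := exists_cyc_not_dvd hA hn
  have h₁ := le_card_of_inj hinj
  have h₂ := hs L hg.pos _ (hg.closed 0)
  have h₃ : L ≠ n := fun h => hL (h ▸ dvd_rfl)
  omega

/-- If the girth is `n - 1 = 2 * h + 1`, every vertex of a shortest cycle has a closed walk of length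
`n`: for `n > 2` primitivity provides a cycle of another length, which is Hamiltonian. -/
lemma closed_of_girth {h : ℕ} {A : Fin (2 * h + 2) → Fin (2 * h + 2) → Prop} (hA : IsPrimitive A)
    (hs : ∀ p, 0 < p → ∀ u, bpow A p u u → 2 * h + 1 ≤ p) {f : ℕ → Fin (2 * h + 2)}
    (hf : IsCyc A f (2 * h + 1)) (i : ℕ) : bpow A (2 * h + 2) (f i) (f i) := by
  -- for `h = 0` the given cycle is a loop, which is traversed twice
  rcases Nat.eq_zero_or_pos h with rfl | hh
  · exact bpow_mul A 1 2 (hf.closed i)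
  obtain ⟨g, L, hg, hL, hinj⟩ := exists_cyc_not_dvd hA (d := 2 * h + 1) (by omega)
  have h₁ := le_card_of_inj hinj
  have h₂ := hs L hg.pos _ (hg.closed 0)
  have h₃ : L ≠ 2 * h + 1 := fun h => hL (h ▸ dvd_rfl)
  obtain rfl : L = 2 * h + 2 := by omega
  have huniv : cycVerts g (2 * h + 2) = Finset.univ :=
    Finset.eq_univ_of_card _ (by rw [card_cycVerts hinj, Fintype.card_fin])
  have hmem : f i ∈ cycVerts g (2 * h + 2) := huniv ▸ Finset.mem_univ _
  obtain ⟨j, -, hj⟩ := Finset.mem_image.1 hmem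
  rw [← hj]
  exact hg.closed j

/-- The bound `k(N) ≤ ⌈((n - 1)² + 1) / 2⌉` for a primitive digraph on `n` vertices. -/
theorem meets_of_primitive {n : ℕ} {A : Fin n → Fin n → Prop} (hA : IsPrimitive A)
    (u v : Fin n) : Meets A (((n - 1) ^ 2 + 2) / 2) u v := by
  have : NeZero n := ⟨fun h => by subst h; exact u.elim0⟩
  have hrow := noZeroRow_of_primitive hA
  rcases Nat.lt_or_ge n 2 with hn | hn
  · have hn1 : n = 1 := by have := NeZero.pos n; omega
    subst hn1
    obtain rfl := Subsingleton.elim u v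
    obtain ⟨w, hw⟩ := exists_walk hrow (((1 - 1) ^ 2 + 2) / 2) u
    exact ⟨w, hw, hw⟩
  obtain ⟨f, s, hf, hinj, hs⟩ := exists_girth hA
  have hsn := girth_lt hn hA hs
  have hcount : Meets A (n - s + s * (n / 2)) u v :=
    hf.meets_of_reach hA hinj
      (fun i j => meets_of_closed hA hf.pos (hf.closed i) (hf.closed j) (by omega)) u v
  have hspos := hf.pos
  rcases Nat.even_or_odd' n with ⟨h, rfl | rfl⟩
  · obtain ⟨h, rfl⟩ : ∃ h', h = h' + 1 := ⟨h - 1, by omega⟩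
    have hK : ((2 * (h + 1) - 1) ^ 2 + 2) / 2 = 1 + (2 * h + h * (2 * h)) := by
      rw [show 2 * (h + 1) - 1 = 2 * h + 1 by omega,
        show (2 * h + 1) ^ 2 + 2 = 2 * (1 + (2 * h + h * (2 * h))) + 1 by ring]
      omega
    rw [hK]
    have hcases : s = 2 * h + 1 ∨ s = 2 * h ∨ s + 1 ≤ 2 * h := by omega
    rcases hcases with rfl | rfl | hs3
    · have := hf.meets_of_reach hA hinj
        (hf.meets_of_succ hrow (closed_of_girth hA hs hf)) u v
      refine this.mono hrow (le_of_eq ?_)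
      rw [show 2 * (h + 1) - (2 * h + 1) = 1 by omega]
      ring
    · obtain ⟨g, L, hg, hL, hginj⟩ := exists_cyc_not_dvd hA (d := 2) le_rfl
      have h₁ := le_card_of_inj hginj
      have h₂ := hs L hg.pos _ (hg.closed 0)
      obtain rfl : L = 2 * h + 1 := by omega
      -- the two cycles share a vertex, their lengths adding up to more than `n`
      have hnd : ¬ Disjoint (cycVerts f (2 * h)) (cycVerts g (2 * h + 1)) := fun hd => by
        have := Finset.card_le_univ (cycVerts f (2 * h) ∪ cycVerts g (2 * h + 1))
        rw [Finset.card_union_of_disjoint hd, card_cycVerts hinj, card_cycVerts hginj,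
          Fintype.card_fin] at this
        omega
      obtain ⟨c, hc₁, hc₂⟩ := Finset.not_disjoint_iff.1 hnd
      obtain ⟨i, -, hi⟩ := Finset.mem_image.1 hc₁
      obtain ⟨x, -, hx⟩ := Finset.mem_image.1 hc₂
      have hclosed : bpow A (2 * h) (g x) (g x) := by
        rw [hx, ← hi]
        exact hf.closed i
      have := hg.meets_of_reach hA hginj (hg.meets_of_pred hrow hclosed) u v
      rwa [show 2 * (h + 1) - (2 * h + 1) = 1 by omega] at this
    · refine hcount.mono hrow ?_
      rw [show 2 * (h + 1) / 2 = h + 1 by omega]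
      obtain ⟨e, rfl⟩ : ∃ e, h = e + 1 := ⟨h - 1, by omega⟩
      have : s * (e + 1) ≤ (2 * e + 1) * (e + 1) := Nat.mul_le_mul_right _ (by omega)
      have h2 : 2 * (e + 1 + 1) - s + s * (e + 1 + 1) = 2 * (e + 1 + 1) + s * (e + 1) := by
        have : s * (e + 1 + 1) = s * (e + 1) + s := by ring
        omega
      rw [h2]
      nlinarith
  · obtain ⟨h, rfl⟩ : ∃ h', h = h' + 1 := ⟨h - 1, by omega⟩
    refine hcount.mono hrow ?_
    rw [show (2 * (h + 1) + 1) / 2 = h + 1 by omega,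
      show ((2 * (h + 1) + 1 - 1) ^ 2 + 2) / 2 = 2 * (h + 1) ^ 2 + 1 by
        rw [Nat.add_sub_cancel, show (2 * (h + 1)) ^ 2 + 2 = 2 * (2 * (h + 1) ^ 2 + 1) by ring]
        omega]
    have : s * h ≤ 2 * (h + 1) * h := Nat.mul_le_mul_right _ (by omega)
    have h2 : 2 * (h + 1) + 1 - s + s * (h + 1) = 2 * (h + 1) + 1 + s * h := by
      have : s * (h + 1) = s * h + s := by ring
      omega
    rw [h2]
    nlinarith

/-! ### Boolean rank factorizations -/

/-- A walk for `B A` of length `k` becomes a walk for `A B` of length `k + 1`. -/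
lemma bpow_conj {n b : ℕ} (A : Fin n → Fin b → Prop) (B : Fin b → Fin n → Prop) (k : ℕ)
    {i j : Fin n} {x y : Fin b} (h : bpow (bmul B A) k x y) (hi : A i x) (hj : B y j) :
    bpow (bmul A B) (k + 1) i j := by
  induction k generalizing i x with
  | zero =>
    obtain rfl : x = y := h
    exact bpow_one _ ⟨x, hi, hj⟩
  | succ k ih =>
    obtain ⟨z, ⟨l, hl₁, hl₂⟩, hz⟩ := h
    exact ⟨l, ⟨x, hi, hl₁⟩, ih hz hl₂⟩

/-- In a factorization of minimal inner dimension every inner index contributes to some entry of the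
product, as it could be dropped otherwise. The hypothesis on the rows of `M` excludes the zero
matrix, whose `brank` is `1` although no inner index contributes. -/
lemma exists_use {n b : ℕ} [NeZero n] {M : Fin n → Fin n → Prop} (hM : NoZeroRow M)
    (hb : brank M = b) {A : Fin n → Fin b → Prop} {B : Fin b → Fin n → Prop} (hAB : M = bmul A B)
    (k : Fin b) : ∃ i j, A i k ∧ B k j := by
  by_contra hcon
  push Not at hcon
  obtain ⟨b, rfl⟩ : ∃ c, b = c + 1 := ⟨b - 1, by have := k.pos; omega⟩
  have hother : ∀ i j l, A i l → B l j → ∃ x, k.succAbove x = l := fun i j l h₁ h₂ =>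
    Fin.exists_succAbove_eq fun h => hcon i j (h ▸ h₁) (h ▸ h₂)
  have hM' : M = bmul (fun i x => A i (k.succAbove x)) (fun x j => B (k.succAbove x) j) := by
    rw [hAB]
    funext i j
    refine propext ⟨?_, ?_⟩
    · rintro ⟨l, h₁, h₂⟩
      obtain ⟨x, rfl⟩ := hother i j l h₁ h₂
      exact ⟨x, h₁, h₂⟩
    · rintro ⟨x, h₁, h₂⟩
      exact ⟨_, h₁, h₂⟩
  have hpos : 0 < b := by
    obtain ⟨j, hj⟩ := hM 0
    rw [hM'] at hj
    obtain ⟨x, -⟩ := hj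
    exact x.pos
  have hle : brank M ≤ b := Nat.sInf_le ⟨hpos, _, _, hM'⟩
  omega

theorem scram_le_of_brank {n b : ℕ} (hn : 2 ≤ n) (M : Fin n → Fin n → Prop)
    (hM : IsPrimitive M) (hb : brank M = b) :
    scram M ≤ ((b - 1) ^ 2 + 2) / 2 + 1 := by
  have : NeZero n := ⟨by omega⟩
  have hrow := noZeroRow_of_primitive hM
  obtain ⟨-, A, B, hAB⟩ : 0 < b ∧ ∃ (A : Fin n → Fin b → Prop) (B : Fin b → Fin n → Prop),
      M = bmul A B := by
    rw [← hb]
    -- the trivial factorization `M = M I` shows that the set defining `brank M` is nonempty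
    refine Nat.sInf_mem (s := {b | 0 < b ∧ ∃ (A : Fin n → Fin b → Prop)
      (B : Fin b → Fin n → Prop), M = bmul A B}) ⟨n, by omega, M, fun i j => i = j, ?_⟩
    funext i j
    exact propext ⟨fun h => ⟨j, h, rfl⟩, fun ⟨k, h, hk⟩ => hk ▸ h⟩
  have huse := exists_use hrow hb hAB
  have hN : IsPrimitive (bmul B A) := by
    obtain ⟨r, -, hJ⟩ := hM
    refine ⟨r + 1, by omega, ?_⟩
    funext x y
    refine eq_true ?_
    obtain ⟨-, i, -, hi⟩ := huse x
    obtain ⟨j, -, hj, -⟩ := huse y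
    exact bpow_conj B A r (by rw [← hAB, hJ]; trivial) hi hj
  refine Nat.sInf_le ⟨by omega, ?_⟩
  funext i j
  refine eq_true ?_
  have hArow : ∀ i, ∃ x, A i x := fun i => by
    obtain ⟨j, hj⟩ := hrow i
    rw [hAB] at hj
    obtain ⟨x, hx, -⟩ := hj
    exact ⟨x, hx⟩
  obtain ⟨x, hx⟩ := hArow i
  obtain ⟨y, hy⟩ := hArow j
  obtain ⟨z, hxz, hyz⟩ := meets_of_primitive hN x y
  obtain ⟨-, l, -, hl⟩ := huse z
  refine ⟨l, ?_, bpow_btrans M _ ?_⟩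
  · rw [hAB]
    exact bpow_conj A B _ hxz hx hl
  · rw [hAB]
    exact bpow_conj A B _ hyz hy hl
end

section
/- For b ≥ 3 and h = ⌈((b−1)²+1)/2⌉, the 2×2 submatrix of W_b^{h−1} with rows {⌊b/2⌋, b} and columns {b−1, b} is a permutation matrix: it equals either [[1,0],[0,1]] or [[0,1],[1,0]]. -/
/-- Walks in the Wielandt digraph on `m + 1` vertices: `x` and `y` count the returns to `0` from
`m - 1` and from `m`. The side condition records that the only arc out of `m` is one of the
latter; `x = 0` leaves room for the empty walk. -/
lemma bpow_wielandt_iff {m : ℕ} (hm : 1 ≤ m) (n : ℕ) (i j : Fin (m + 1)) :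
    bpow (Wielandt (m + 1)) n i j ↔
      ∃ x y : ℕ, n + i.val = j.val + x * m + y * (m + 1) ∧ (i.val = m → x = 0 ∨ 1 ≤ y) := by
  induction n generalizing i with
  | zero =>
    simp only [bpow]
    constructor
    · rintro rfl
      exact ⟨0, 0, by simp, by simp⟩
    · rintro ⟨x, y, h, hi⟩
      have hlt := i.isLt
      have hy : y = 0 := by
        by_contra hy
        have : 1 * (m + 1) ≤ y * (m + 1) := Nat.mul_le_mul_right _ (by omega)
        omega
      have hx : x = 0 := by
        by_contra hx
        have : 1 * m ≤ x * m := Nat.mul_le_mul_right _ (by omega)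
        have : i.val = m := by omega
        have := hi this
        omega
      subst hx hy
      exact Fin.ext (by omega)
  | succ n ih =>
    simp only [bpow, bmul, ih, Wielandt]
    constructor
    · rintro ⟨k, hk, x, y, h, hx⟩
      have hklt := k.isLt
      rcases hk with hk | ⟨hi, hk⟩ | ⟨hi, hk⟩
      · exact ⟨x, y, by omega, by omega⟩
      · refine ⟨x + 1, y, ?_, by omega⟩
        rw [add_mul]; omega
      · refine ⟨x, y + 1, ?_, by omega⟩
        rw [add_mul]; omega
    · rintro ⟨x, y, h, hx⟩
      have hlt := i.isLt
      have hjlt := j.isLt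
      by_cases him : i.val = m
      · -- `x = y = 0` would give `n + 1 + m = j`, so the long cycle is used
        have hy : 1 ≤ y := by
          rcases hx him with rfl | hy
          · by_contra hy
            have : y = 0 := by omega
            subst this
            omega
          · exact hy
        obtain ⟨y, rfl⟩ := Nat.exists_eq_add_of_le' hy
        refine ⟨⟨0, by omega⟩, Or.inr (Or.inr ⟨by omega, rfl⟩), x, y, ?_, ?_⟩
        · rw [add_mul] at h
          simp only
          omega
        · simp only
          omega
      · by_cases hc : i.val = m - 1 ∧ 1 ≤ x
        · obtain ⟨x, rfl⟩ := Nat.exists_eq_add_of_le' hc.2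
          refine ⟨⟨0, by omega⟩, Or.inr (Or.inl ⟨by omega, rfl⟩), x, y, ?_, ?_⟩
          · rw [add_mul] at h
            simp only
            omega
          · simp only
            omega
        · refine ⟨⟨i.val + 1, by omega⟩, Or.inl rfl, x, y, ?_, ?_⟩
          · simp only
            omega
          · simp only
            omega

/-- A number with quotient `q - 1` and remainder `r > q - 1` modulo `m` is not of the form
`x * m + y * (m + 1)`; `m` is added to both sides so that `q = 0` (a negative number) is
covered. -/
lemma not_representable {m x y q r : ℕ} (hr : r < m) (hqr : q ≤ r)
    (h : (x + y) * m + y + m = q * m + r) : False := by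
  rcases Nat.lt_or_ge (x + y) q with hlt | hge
  · obtain ⟨d, rfl⟩ := Nat.exists_eq_add_of_lt hlt
    have : (x + y + d + 1) * m = (x + y) * m + d * m + m := by ring
    omega
  · have := Nat.mul_le_mul_right m hge
    omega

theorem wielandt_submatrix_perm {b : ℕ} (hb : 3 ≤ b) (h : ℕ)
    (hh : h = ((b - 1) ^ 2 + 2) / 2) :
    let P := bpow (Wielandt b) (h - 1)
    let r1 : Fin b := ⟨b / 2 - 1, by omega⟩
    let r2 : Fin b := ⟨b - 1, by omega⟩
    let c1 : Fin b := ⟨b - 2, by omega⟩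
    let c2 : Fin b := ⟨b - 1, by omega⟩
    (P r1 c1 ∧ P r2 c2 ∧ ¬ P r1 c2 ∧ ¬ P r2 c1) ∨
      (P r1 c2 ∧ P r2 c1 ∧ ¬ P r1 c1 ∧ ¬ P r2 c2) := by
  obtain ⟨m, rfl⟩ : ∃ m, b = m + 1 := ⟨b - 1, by omega⟩
  intro P r1 r2 c1 c2
  simp only [P, r1, r2, c1, c2, bpow_wielandt_iff (show 1 ≤ m by omega)]
  rw [Nat.add_sub_cancel] at hh
  rcases Nat.even_or_odd' m with ⟨t, rfl | rfl⟩
  · obtain ⟨s, rfl⟩ : ∃ s, t = s + 1 := ⟨t - 1, by omega⟩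
    have hn : h - 1 = 2 * (s * s) + 4 * s + 2 := by
      have : (2 * (s + 1)) ^ 2 = 4 * (s * s) + 8 * s + 4 := by ring
      omega
    have e1 : (2 * (s + 1) + 1) / 2 - 1 = s := by omega
    have e2 : 2 * (s + 1) + 1 - 2 = 2 * s + 1 := by omega
    have e3 : 2 * (s + 1) + 1 - 1 = 2 * s + 2 := by omega
    rw [hn, e1, e2, e3]
    refine Or.inr ⟨⟨0, s, by ring, by omega⟩, ⟨s, 1, by ring, by omega⟩, ?_, ?_⟩
    · rintro ⟨x, y, hxy, -⟩
      exact not_representable (m := 2 * (s + 1)) (x := x) (y := y) (q := s + 1) (r := s + 1)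
        (by omega) le_rfl (by linarith)
    · rintro ⟨x, y, hxy, hy⟩
      obtain ⟨y, rfl⟩ : ∃ z, y = z + 1 := by
        refine ⟨y - 1, ?_⟩
        rcases hy (by omega) with rfl | hy
        · rcases y with _ | y
          · omega
          · rfl
        · omega
      exact not_representable (m := 2 * (s + 1)) (x := x) (y := y) (q := s) (r := 2 * s + 1)
        (by omega) (by omega) (by linarith)
  · have hn : h - 1 = 2 * (t * t) + 2 * t := by
      have : (2 * t + 1) ^ 2 = 4 * (t * t) + 4 * t + 1 := by ring
      omega
    have e1 : (2 * t + 1 + 1) / 2 - 1 = t := by omega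
    have e2 : 2 * t + 1 + 1 - 2 = 2 * t := by omega
    have e3 : 2 * t + 1 + 1 - 1 = 2 * t + 1 := by omega
    rw [hn, e1, e2, e3]
    refine Or.inl ⟨⟨t, 0, by ring, by omega⟩, ⟨0, t, by ring, by omega⟩, ?_, ?_⟩
    · rintro ⟨x, y, hxy, -⟩
      exact not_representable (m := 2 * t + 1) (x := x) (y := y) (q := t) (r := 2 * t)
        (by omega) (by omega) (by linarith)
    · rintro ⟨x, y, hxy, hy⟩
      obtain ⟨y, rfl⟩ : ∃ z, y = z + 1 := by
        refine ⟨y - 1, ?_⟩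
        rcases hy rfl with rfl | hy
        · rcases y with _ | y
          · omega
          · rfl
        · omega
      exact not_representable (m := 2 * t + 1) (x := x) (y := y) (q := t) (r := t)
        (by omega) le_rfl (by linarith)
end
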